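/- For fixed B ⊆ [n], E ⊆ [n]\B, I ⊆ B, the function G_{B,E,I}(M) = 1 if B is a basis of M with E(B) = E and I(B) = I, and 0 otherwise, is a valuation under matroid subdivisions. Consequently the basis-activity generating function F(M) = Σ_{B basis of M} (B, E(B), I(B)), valued in the free abelian group on triples (B,E,I), is a valuation. -/

import Mathlib

open Finset
open scoped Pointwise

/-- The indicator vector `e_B ∈ ℝⁿ` of a subset `B ⊆ [n]`. -/
def indVec (n : ℕ) (B : Finset (Fin n)) : Fin n → ℝ := fun i => if i ∈ B then 1 else 0

/-- A collection of subsets of `[n]` is the collection of bases of a matroid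
(possibly the empty matroid) iff it satisfies the basis exchange axiom. -/
def IsBases {n : ℕ} (𝓑 : Finset (Finset (Fin n))) : Prop :=
  ∀ B₁ ∈ 𝓑, ∀ B₂ ∈ 𝓑, ∀ b₁ ∈ B₁ \ B₂, ∃ b₂ ∈ B₂ \ B₁, insert b₂ (B₁.erase b₁) ∈ 𝓑

/-- The matroid (basis) polytope: convex hull of indicator vectors of the bases. -/
def polytope {n : ℕ} (𝓑 : Finset (Finset (Fin n))) : Set (Fin n → ℝ) :=
  convexHull ℝ (indVec n '' ↑𝓑)

/-- `a ∉ B` is externally active w.r.t. the basis `B` if `a < b` for every `b ∈ B`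
such that `B - b ∪ a` is a basis. -/
def ExtActive {n : ℕ} (𝓑 : Finset (Finset (Fin n))) (B : Finset (Fin n)) (a : Fin n) : Prop :=
  a ∉ B ∧ ∀ b ∈ B, insert a (B.erase b) ∈ 𝓑 → a < b

/-- `b ∈ B` is internally active w.r.t. the basis `B` if `b < a` for every `a ∉ B`
such that `B - b ∪ a` is a basis. -/
def IntActive {n : ℕ} (𝓑 : Finset (Finset (Fin n))) (B : Finset (Fin n)) (b : Fin n) : Prop :=
  b ∈ B ∧ ∀ a, a ∉ B → insert a (B.erase b) ∈ 𝓑 → b < a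

/-- A subdivision of a polytope `P` into polytopes `Ps i`: their union is `P`,
their vertices are vertices of `P`, and each pairwise intersection is a proper
(exposed) face of both pieces. -/
def IsSubdivision {n m : ℕ} (P : Set (Fin n → ℝ)) (Ps : Fin m → Set (Fin n → ℝ)) : Prop :=
  (⋃ i, Ps i) = P ∧
  (∀ i, Set.extremePoints ℝ (Ps i) ⊆ Set.extremePoints ℝ P) ∧
  ∀ i j, i ≠ j →
    IsExposed ℝ (Ps i) (Ps i ∩ Ps j) ∧ IsExposed ℝ (Ps j) (Ps i ∩ Ps j) ∧
    Ps i ∩ Ps j ≠ Ps i ∧ Ps i ∩ Ps j ≠ Ps j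

/-- A matroid subdivision of the matroid `𝓑` into the matroids `𝓜 i`. -/
def IsMatroidSubdivision {n m : ℕ} (𝓑 : Finset (Finset (Fin n)))
    (𝓜 : Fin m → Finset (Finset (Fin n))) : Prop :=
  IsBases 𝓑 ∧ (∀ i, IsBases (𝓜 i)) ∧ IsSubdivision (polytope 𝓑) fun i => polytope (𝓜 i)

open Classical in
/-- For `A ⊆ [m]`, the matroid `M_A` whose polytope is `⋂_{a ∈ A} Q(M_a)`:
its bases are the bases of `M` whose indicator vector lies in every `Q(M_a)`, `a ∈ A`.
For `A = ∅` this is `M` itself. -/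
noncomputable def interMatroid {n m : ℕ} (𝓑 : Finset (Finset (Fin n)))
    (𝓜 : Fin m → Finset (Finset (Fin n))) (A : Finset (Fin m)) : Finset (Finset (Fin n)) :=
  𝓑.filter fun B => ∀ a ∈ A, indVec n B ∈ polytope (𝓜 a)

/-- `f` is a valuation under matroid subdivisions:
`∑_{A ⊆ [m]} (-1)^{|A|} f(M_A) = 0` for every matroid subdivision. -/
def IsValuation {n : ℕ} {G : Type*} [AddCommGroup G] (f : Finset (Finset (Fin n)) → G) : Prop :=
  ∀ (m : ℕ) (𝓑 : Finset (Finset (Fin n))) (𝓜 : Fin m → Finset (Finset (Fin n))),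
    IsMatroidSubdivision 𝓑 𝓜 →
    ∑ A : Finset (Fin m), (-1 : ℤ) ^ A.card • f (interMatroid 𝓑 𝓜 A) = 0

open Classical in
/-- The set `E(B)` of externally active elements of `B`. -/
noncomputable def EAset {n : ℕ} (𝓑 : Finset (Finset (Fin n))) (B : Finset (Fin n)) :
    Finset (Fin n) :=
  Finset.univ.filter fun a => ExtActive 𝓑 B a

open Classical in
/-- The set `I(B)` of internally active elements of `B`. -/
noncomputable def IAset {n : ℕ} (𝓑 : Finset (Finset (Fin n))) (B : Finset (Fin n)) :
    Finset (Fin n) :=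
  Finset.univ.filter fun b => IntActive 𝓑 B b


lemma interval_sum {ι : Type*} (s : Finset ι) (c : ι → ℤ) (m M : ι → ℝ)
    (hmM : ∀ j ∈ s, m j ≤ M j)
    (h : ∀ t : ℝ, ∑ j ∈ s, c j * (if m j ≤ t ∧ t ≤ M j then 1 else 0) = 0) :
    ∑ j ∈ s, c j = 0 := by
  classical
  obtain ⟨ε, hε0, hε⟩ : ∃ ε : ℝ, 0 < ε ∧ ∀ j ∈ s, ∀ k ∈ s,
      (M k < M j → M k + ε < M j) ∧ (M k < m j → M k + ε < m j) := by
    have key : ∀ x y : ℝ, ∀ᶠ ε in nhdsWithin (0 : ℝ) (Set.Ioi 0), x < y → x + ε < y := by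
      intro x y
      by_cases hxy : x < y
      · have : ∀ᶠ ε in nhdsWithin (0 : ℝ) (Set.Ioi 0), ε < y - x :=
          nhdsWithin_le_nhds (gt_mem_nhds (by linarith))
        filter_upwards [this] with ε h1 _
        linarith
      · exact Filter.Eventually.of_forall fun _ h => absurd h hxy
    have h1 : ∀ᶠ ε in nhdsWithin (0 : ℝ) (Set.Ioi 0), ∀ j ∈ s, ∀ k ∈ s,
        (M k < M j → M k + ε < M j) ∧ (M k < m j → M k + ε < m j) := by
      rw [Filter.eventually_all_finset]
      intro j _
      rw [Filter.eventually_all_finset]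
      intro k _
      exact (key _ _).and (key _ _)
    obtain ⟨ε, h2, h3⟩ := (h1.and self_mem_nhdsWithin).exists
    exact ⟨ε, h3, h2⟩
  have h0 : ∑ t ∈ s.image M, (∑ j ∈ s, c j * (if m j ≤ t ∧ t ≤ M j then 1 else 0)
      - ∑ j ∈ s, c j * (if m j ≤ t + ε ∧ t + ε ≤ M j then 1 else 0)) = 0 := by
    simp only [h]; simp
  have h1 : ∑ t ∈ s.image M, (∑ j ∈ s, c j * (if m j ≤ t ∧ t ≤ M j then 1 else 0)
      - ∑ j ∈ s, c j * (if m j ≤ t + ε ∧ t + ε ≤ M j then 1 else 0))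
      = ∑ t ∈ s.image M, ∑ j ∈ s, c j * (if M j = t then 1 else 0) := by
    refine Finset.sum_congr rfl fun t ht => ?_
    rw [← Finset.sum_sub_distrib]
    refine Finset.sum_congr rfl fun j hj => ?_
    obtain ⟨k, hk, rfl⟩ := Finset.mem_image.1 ht
    obtain ⟨ha, hb⟩ := hε j hj k hk
    have hc := hmM j hj
    rw [← mul_sub]
    congr 1
    rcases lt_trichotomy (M k) (M j) with h1 | h1 | h1
    · have h2 := ha h1
      rw [if_neg h1.ne']
      by_cases h3 : m j ≤ M k
      · rw [if_pos ⟨h3, h1.le⟩, if_pos ⟨by linarith, h2.le⟩]; simp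
      · have := hb (not_le.1 h3)
        rw [if_neg (fun h => h3 h.1), if_neg (fun h => by linarith [h.1])]; simp
    · rw [if_pos h1.symm, if_pos ⟨by linarith, by linarith⟩, if_neg (fun h => by linarith [h.2])]
      simp
    · rw [if_neg h1.ne, if_neg (fun h => by linarith [h.2]), if_neg (fun h => by linarith [h.2])]
      simp
  rw [h1, Finset.sum_comm] at h0
  rw [← h0]
  refine Finset.sum_congr rfl fun j hj => ?_
  rw [← Finset.mul_sum, Finset.sum_ite_eq, if_pos (Finset.mem_image_of_mem M hj), mul_one]

open Classical in
lemma euler_aux {ι : Type*} [Fintype ι] {n : ℕ} (c : ι → ℤ) (K : ι → Set (Fin n → ℝ))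
    (hcomp : ∀ j, IsCompact (K j)) (hconv : ∀ j, Convex ℝ (K j))
    (s : Finset (Fin n)) (i : Fin n)
    (h : ∀ y : Fin n → ℝ, ∑ j, c j * (if ∃ x ∈ K j, ∀ k ∈ insert i s, x k = y k then 1 else 0) = 0)
    (hi : i ∉ s) (y : Fin n → ℝ) :
    ∑ j, c j * (if ∃ x ∈ K j, ∀ k ∈ s, x k = y k then 1 else 0) = 0 := by
  have hI : ∀ j, ∃ m M : ℝ, (∃ x ∈ K j, ∀ k ∈ s, x k = y k) → m ≤ M ∧
      ∀ t, (m ≤ t ∧ t ≤ M) ↔ ∃ x ∈ K j, (∀ k ∈ s, x k = y k) ∧ x i = t := by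
    intro j
    by_cases hne : ∃ x ∈ K j, ∀ k ∈ s, x k = y k
    · set L : Set (Fin n → ℝ) := K j ∩ {x | ∀ k ∈ s, x k = y k} with hL
      have hcl : IsClosed {x : Fin n → ℝ | ∀ k ∈ s, x k = y k} := by
        have : {x : Fin n → ℝ | ∀ k ∈ s, x k = y k} = ⋂ k ∈ s, {x | x k = y k} := by
          ext; simp
        rw [this]
        exact isClosed_biInter fun k _ => isClosed_eq (continuous_apply k) continuous_const
      have hcv : Convex ℝ {x : Fin n → ℝ | ∀ k ∈ s, x k = y k} := by
        intro x hx z hz a b _ _ hab k hk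
        simp only [Pi.add_apply, Pi.smul_apply, smul_eq_mul, hx k hk, hz k hk]
        rw [← add_mul, hab, one_mul]
      have hLc : IsCompact L := (hcomp j).inter_right hcl
      have hLv : Convex ℝ L := (hconv j).inter hcv
      have hLn : L.Nonempty := by obtain ⟨x, h1, h2⟩ := hne; exact ⟨x, h1, h2⟩
      set J := (fun x : Fin n → ℝ => x i) '' L with hJ
      have hJc : IsCompact J := hLc.image (continuous_apply i)
      have hJv : Convex ℝ J := hLv.linear_image (LinearMap.proj (R := ℝ) (φ := fun _ => ℝ) i)
      have hJn : J.Nonempty := hLn.image _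
      refine ⟨sInf J, sSup J, fun _ => ⟨?_, ?_⟩⟩
      · exact (hJc.isLeast_sInf hJn).2 (hJc.isGreatest_sSup hJn).1
      · intro t
        have : t ∈ J ↔ ∃ x ∈ K j, (∀ k ∈ s, x k = y k) ∧ x i = t := by
          simp [hJ, hL, and_assoc]
        rw [← this]
        constructor
        · intro ht
          exact hJv.ordConnected.out (hJc.isLeast_sInf hJn).1 (hJc.isGreatest_sSup hJn).1 ht
        · intro ht
          exact ⟨(hJc.isLeast_sInf hJn).2 ht, (hJc.isGreatest_sSup hJn).2 ht⟩
    · exact ⟨0, 0, fun h => absurd h hne⟩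
  choose m M hmM using hI
  simp only [mul_ite, mul_one, mul_zero]
  rw [← Finset.sum_filter]
  apply interval_sum _ c m M
  · intro j hj
    exact (hmM j (Finset.mem_filter.1 hj).2).1
  · intro t
    rw [Finset.sum_filter]
    refine (Finset.sum_congr rfl fun j _ => ?_).trans (h (Function.update y i t))
    have h2 : (∃ x ∈ K j, ∀ k ∈ insert i s, x k = Function.update y i t k) ↔
        ∃ x ∈ K j, (∀ k ∈ s, x k = y k) ∧ x i = t := by
      refine exists_congr fun x => and_congr_right fun _ => ?_
      rw [Finset.forall_mem_insert, Function.update_self, and_comm]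
      refine and_congr_left fun _ => forall₂_congr fun k hk => ?_
      rw [Function.update_of_ne (ne_of_mem_of_not_mem hk hi)]
    by_cases hne : ∃ x ∈ K j, ∀ k ∈ s, x k = y k
    · rw [if_pos hne]
      simp only [h2, (hmM j hne).2]
    · rw [if_neg hne, if_neg, mul_zero]
      rw [h2]
      rintro ⟨x, h3, h4, _⟩
      exact hne ⟨x, h3, h4⟩

open Classical in
lemma euler {ι : Type*} [Fintype ι] {n : ℕ} (c : ι → ℤ) (K : ι → Set (Fin n → ℝ))
    (hcomp : ∀ j, IsCompact (K j)) (hconv : ∀ j, Convex ℝ (K j))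
    (h : ∀ x : Fin n → ℝ, ∑ j, c j * (if x ∈ K j then 1 else 0) = 0) :
    ∑ j, c j * (if (K j).Nonempty then 1 else 0) = 0 := by
  have key : ∀ s : Finset (Fin n), ∀ y : Fin n → ℝ,
      ∑ j, c j * (if ∃ x ∈ K j, ∀ k ∈ sᶜ, x k = y k then 1 else 0) = 0 := by
    intro s
    induction s using Finset.induction_on with
    | empty =>
      intro y
      refine (Finset.sum_congr rfl fun j _ => ?_).trans (h y)
      have : (∃ x ∈ K j, ∀ k ∈ (∅ : Finset (Fin n))ᶜ, x k = y k) ↔ y ∈ K j := by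
        constructor
        · rintro ⟨x, hx, h2⟩
          have : x = y := funext fun k => h2 k (by simp)
          exact this ▸ hx
        · intro hy
          exact ⟨y, hy, fun _ _ => rfl⟩
      simp only [this]
    | insert i s hi ih =>
      intro y
      apply euler_aux c K hcomp hconv _ i _ (by simp)
      have : insert i (insert i s)ᶜ = sᶜ := by
        ext k; by_cases hk : k = i <;> simp [hk, hi]
      rw [this]
      exact ih
  have := key Finset.univ 0
  refine (Finset.sum_congr rfl fun j _ => ?_).trans this
  congr 1
  by_cases hne : (K j).Nonempty
  · obtain ⟨x, hx⟩ := id hne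
    rw [if_pos hne, if_pos ⟨x, hx, fun k hk => by simp at hk⟩]
  · rw [if_neg hne, if_neg]
    rintro ⟨x, hx, _⟩
    exact hne ⟨x, hx⟩

lemma symm_exchange {n : ℕ} {𝓑 : Finset (Finset (Fin n))} (h𝓑 : IsBases 𝓑)
    {B B' : Finset (Fin n)} (hB : B ∈ 𝓑) (hB' : B' ∈ 𝓑) {b : Fin n} (hb : b ∈ B) (hb' : b ∉ B') :
    ∃ a ∈ B', a ∉ B ∧ insert a (B.erase b) ∈ 𝓑 ∧ insert b (B'.erase a) ∈ 𝓑 := by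
  classical
  let M : Matroid (Fin n) := Matroid.ofIsBaseOfFinite (E := Set.univ) Set.finite_univ
    (fun X => ∃ C ∈ 𝓑, (C : Set (Fin n)) = X) ⟨B, B, hB, rfl⟩
    (by
      rintro _ _ ⟨C, hC, rfl⟩ ⟨D, hD, rfl⟩ a ha
      obtain ⟨e, he, h⟩ := h𝓑 C hC D hD a (by simpa using ha)
      exact ⟨e, by simpa using he, _, h, by simp⟩)
    (fun _ _ => Set.subset_univ _)
  have hM : ∀ X, M.IsBase X ↔ ∃ C ∈ 𝓑, (C : Set (Fin n)) = X := fun X => Iff.rfl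
  have hE : M.E = Set.univ := rfl
  have h1 : M.IsBase (B : Set (Fin n)) := ⟨B, hB, rfl⟩
  have h2 : M.IsBase (B' : Set (Fin n)) := ⟨B', hB', rfl⟩
  have swap : ∀ (D : Finset (Fin n)), M.IsBase (D : Set (Fin n)) → ∀ x y, x ∉ D → y ∈ D →
      y ∈ M.fundCircuit x D → insert x (D.erase y) ∈ 𝓑 := by
    intro D hD x y hx hy hxy
    rw [hD.indep.mem_fundCircuit_iff (by rw [hD.closure_eq, hE]; trivial) (by simpa using hx)] at hxy
    have := hD.exchange_isBase_of_indep' (by simpa using hy) (by simpa using hx) hxy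
    obtain ⟨C, hC, h3⟩ := (hM _).1 this
    have h4 : C = insert x (D.erase y) := by
      ext k
      have : k ∈ (C : Set (Fin n)) ↔ k ∈ insert x (D : Set (Fin n)) \ {y} := by rw [h3]
      simp at this
      simp only [Finset.mem_insert, Finset.mem_erase]
      rw [this]
      constructor
      · tauto
      · rintro (rfl | h)
        · exact ⟨Or.inl rfl, fun h => hx (h ▸ hy)⟩
        · tauto
    exact h4 ▸ hC
  have hC := h2.fundCircuit_isCircuit (x := b) (by rw [hE]; trivial) (by simpa using hb')
  have hK := M.fundCocircuit_isCocircuit (e := b) (by simpa using hb) h1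
  have hnt := hC.isCocircuit_inter_nontrivial hK
    ⟨b, M.mem_fundCircuit _ _, M.mem_fundCocircuit _ _⟩
  obtain ⟨a, ⟨haC, haK⟩, hab⟩ := hnt.exists_ne b
  have ha' : a ∈ B' := by
    have := M.fundCircuit_subset_insert _ _ haC
    simpa [hab] using this
  have ha : a ∉ B := by
    have := M.fundCocircuit_subset_insert_compl _ _ haK
    simpa [hab, hE] using this
  rw [h1.mem_fundCocircuit_iff_mem_fundCircuit] at haK
  exact ⟨a, ha', ha, swap B h1 a b ha hb haK, swap B' h2 b a hb' ha' haC⟩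

/-- Neighbours of `B` in the matroid. -/
noncomputable def nbrs {n : ℕ} (𝓑 : Finset (Finset (Fin n))) (B : Finset (Fin n)) :
    Finset (Finset (Fin n)) :=
  open Classical in 𝓑.filter fun C => ∃ a, a ∉ B ∧ ∃ b ∈ B, C = insert a (B.erase b)

/-- The local cone at `B`. -/
def locCone {n : ℕ} (𝓑 : Finset (Finset (Fin n))) (B : Finset (Fin n)) : Set (Fin n → ℝ) :=
  {x | ∃ ν : Finset (Fin n) → ℝ, (∀ C, 0 ≤ ν C) ∧
    x = indVec n B + ∑ C ∈ nbrs 𝓑 B, ν C • (indVec n C - indVec n B)}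

lemma locCone_convex {n : ℕ} (𝓑 : Finset (Finset (Fin n))) (B : Finset (Fin n)) :
    Convex ℝ (locCone 𝓑 B) := by
  rintro x ⟨ν, hν, rfl⟩ y ⟨μ, hμ, rfl⟩ a b ha hb hab
  refine ⟨fun C => a * ν C + b * μ C, fun C => by have := hν C; have := hμ C; positivity, ?_⟩
  simp only [add_smul, mul_smul, Finset.sum_add_distrib, ← Finset.smul_sum, smul_add]
  have : indVec n B = a • indVec n B + b • indVec n B := by rw [← add_smul, hab, one_smul]
  nth_rewrite 5 [this]
  abel

lemma mem_locCone {n : ℕ} {𝓑 : Finset (Finset (Fin n))} (h𝓑 : IsBases 𝓑)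
    {B : Finset (Fin n)} (hB : B ∈ 𝓑) : ∀ (k : ℕ) (B' : Finset (Fin n)), B' ∈ 𝓑 →
      (B \ B').card = k → indVec n B' ∈ locCone 𝓑 B := by
  intro k
  induction k with
  | zero =>
    intro B' hB' hk
    have hsub : B ⊆ B' := by
      rw [Finset.card_eq_zero, Finset.sdiff_eq_empty_iff_subset] at hk; exact hk
    have hsub' : B' ⊆ B := by
      intro x hx
      by_contra hxB
      obtain ⟨y, hy, _⟩ := h𝓑 B' hB' B hB x (by simp [hx, hxB])
      rw [Finset.mem_sdiff] at hy
      exact hy.2 (hsub hy.1)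
    have : B' = B := Finset.Subset.antisymm hsub' hsub
    subst this
    exact ⟨0, fun _ => le_rfl, by simp⟩
  | succ k ih =>
    intro B' hB' hk
    obtain ⟨b, hb⟩ := Finset.card_pos.1 (by omega : 0 < (B \ B').card)
    have hb1 := (Finset.mem_sdiff.1 hb).1
    have hb2 := (Finset.mem_sdiff.1 hb).2
    obtain ⟨a, ha', ha, h1, h2⟩ := symm_exchange h𝓑 hB hB' hb1 hb2
    have hcard : (B \ insert b (B'.erase a)).card = k := by
      have : B \ insert b (B'.erase a) = (B \ B').erase b := by
        ext x
        simp only [Finset.mem_sdiff, Finset.mem_insert, Finset.mem_erase]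
        by_cases hx : x = a
        · subst hx; simp [ha]
        · tauto
      rw [this, Finset.card_erase_of_mem hb, hk]; rfl
    obtain ⟨ν, hν, h3⟩ := ih _ h2 hcard
    classical
    have hn : insert a (B.erase b) ∈ nbrs 𝓑 B := by
      unfold nbrs
      rw [Finset.mem_filter]
      exact ⟨h1, a, ha, b, hb1, rfl⟩
    refine ⟨fun C => ν C + if C = insert a (B.erase b) then 1 else 0,
      fun C => by have := hν C; dsimp only; split_ifs <;> linarith, ?_⟩
    simp only [add_smul, Finset.sum_add_distrib, ite_smul, one_smul, zero_smul,
      Finset.sum_ite_eq', if_pos hn]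
    rw [← add_assoc, ← h3]
    have hab : a ≠ b := fun h => ha (h ▸ hb1)
    ext x
    simp only [indVec, Pi.add_apply, Pi.sub_apply, Finset.mem_insert, Finset.mem_erase]
    by_cases hxa : x = a
    · subst hxa; simp [ha', ha, hab]
    · by_cases hxb : x = b
      · subst hxb; simp [hb1, hb2, hxa]
      · simp [hxa, hxb]

lemma polytope_subset_locCone {n : ℕ} {𝓑 : Finset (Finset (Fin n))} (h𝓑 : IsBases 𝓑)
    {B : Finset (Fin n)} (hB : B ∈ 𝓑) : polytope 𝓑 ⊆ locCone 𝓑 B := by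
  apply convexHull_min _ (locCone_convex 𝓑 B)
  rintro _ ⟨B', hB', rfl⟩
  exact mem_locCone h𝓑 hB _ B' hB' rfl

/-- l1 distance (on the cube) to the vertex `B`. -/
noncomputable def hdist {n : ℕ} (B : Finset (Fin n)) (x : Fin n → ℝ) : ℝ :=
  ∑ i, if i ∈ B then 1 - x i else x i

lemma hdist_comb {n : ℕ} (B : Finset (Fin n)) (x y : Fin n → ℝ) (a b : ℝ) (hab : a + b = 1) :
    hdist B (a • x + b • y) = a * hdist B x + b * hdist B y := by
  unfold hdist
  rw [Finset.mul_sum, Finset.mul_sum, ← Finset.sum_add_distrib]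
  refine Finset.sum_congr rfl fun i _ => ?_
  split_ifs
  · simp only [Pi.add_apply, Pi.smul_apply, smul_eq_mul]
    linear_combination -hab
  · simp

lemma hdist_ge {n : ℕ} {𝓑 : Finset (Finset (Fin n))} {B : Finset (Fin n)} (hB : B ∉ 𝓑)
    {x : Fin n → ℝ} (hx : x ∈ polytope 𝓑) : 1 ≤ hdist B x := by
  have hc : Convex ℝ {x : Fin n → ℝ | 1 ≤ hdist B x} := by
    intro x hx y hy a b ha hb hab
    simp only [Set.mem_ofPred_eq] at *
    rw [hdist_comb _ _ _ _ _ hab]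
    nlinarith
  refine convexHull_min ?_ hc hx
  rintro _ ⟨C, hC, rfl⟩
  have hne : C ≠ B := fun h => hB (h ▸ hC)
  have : ∃ i, ¬ (i ∈ C ↔ i ∈ B) := by
    by_contra hcon
    push Not at hcon
    exact hne (Finset.ext hcon)
  obtain ⟨i, hi⟩ := this
  have h0 : ∀ j ∈ Finset.univ, (0 : ℝ) ≤ if j ∈ B then 1 - indVec n C j else indVec n C j := by
    intro j _
    unfold indVec
    split_ifs <;> simp
  refine le_trans ?_ (Finset.single_le_sum h0 (Finset.mem_univ i))
  unfold indVec
  by_cases h1 : i ∈ B <;> by_cases h2 : i ∈ C <;> simp_all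

lemma hdist_self {n : ℕ} (B : Finset (Fin n)) : hdist B (indVec n B) = 0 := by
  unfold hdist indVec
  refine Finset.sum_eq_zero fun i _ => ?_
  split_ifs <;> simp

lemma indVec_mem {n : ℕ} {𝓑 : Finset (Finset (Fin n))} {B : Finset (Fin n)} :
    indVec n B ∈ polytope 𝓑 ↔ B ∈ 𝓑 := by
  constructor
  · intro h
    by_contra hB
    have := hdist_ge hB h
    rw [hdist_self] at this
    linarith
  · intro h
    exact subset_convexHull _ _ ⟨B, h, rfl⟩

/-- If `x` lies in a matroid polytope and in exposed faces through `e_B`, the neighbours of `B`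
used to express `x` lie on all these faces. -/
lemma exists_nbr {n : ℕ} {𝓑 : Finset (Finset (Fin n))} (h𝓑 : IsBases 𝓑)
    {B : Finset (Fin n)} (hB : B ∈ 𝓑) {x : Fin n → ℝ} (hx : x ∈ polytope 𝓑)
    {κ : Type*} (A : Set κ) (Q : κ → Set (Fin n → ℝ))
    (hQ : ∀ i ∈ A, IsExposed ℝ (polytope 𝓑) (polytope 𝓑 ∩ Q i))
    (hxQ : ∀ i ∈ A, x ∈ Q i) (hBQ : ∀ i ∈ A, indVec n B ∈ Q i)
    (w : Fin n → ℝ) (hw : 0 < ∑ i, w i * (x i - indVec n B i)) :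
    ∃ a, a ∉ B ∧ ∃ b ∈ B, insert a (B.erase b) ∈ 𝓑 ∧
      (∀ i ∈ A, indVec n (insert a (B.erase b)) ∈ Q i) ∧ w b < w a := by
  classical
  obtain ⟨ν, hν, hxe⟩ := polytope_subset_locCone h𝓑 hB hx
  have h1 : ∑ i, w i * (x i - indVec n B i) =
      ∑ C ∈ nbrs 𝓑 B, ν C * ∑ i, w i * (indVec n C i - indVec n B i) := by
    simp only [Finset.mul_sum]
    rw [Finset.sum_comm]
    refine Finset.sum_congr rfl fun i _ => ?_
    rw [hxe]
    simp only [Pi.add_apply, Finset.sum_apply, Pi.smul_apply, Pi.sub_apply, smul_eq_mul,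
      add_sub_cancel_left, Finset.mul_sum]
    refine Finset.sum_congr rfl fun C _ => ?_
    ring
  rw [h1] at hw
  obtain ⟨C, hC, hpos⟩ := Finset.exists_lt_of_sum_lt (s := nbrs 𝓑 B) (f := fun _ => (0 : ℝ))
    (by simpa using hw)
  have hνC : 0 < ν C := by
    rcases (hν C).lt_or_eq with h | h
    · exact h
    · rw [← h] at hpos; simp at hpos
  have hwC : 0 < ∑ i, w i * (indVec n C i - indVec n B i) := by
    by_contra h
    nlinarith
  have hC2 := hC
  unfold nbrs at hC2
  rw [Finset.mem_filter] at hC2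
  obtain ⟨hCB, a, ha, b, hb, rfl⟩ := hC2
  have hab : a ≠ b := fun h => ha (h ▸ hb)
  refine ⟨a, ha, b, hb, hCB, ?_, ?_⟩
  · intro i hi
    obtain ⟨l, hl⟩ := hQ i hi ⟨x, hx, hxQ i hi⟩
    have hx' : x ∈ {x ∈ polytope 𝓑 | ∀ y ∈ polytope 𝓑, l y ≤ l x} := hl ▸ ⟨hx, hxQ i hi⟩
    have hB' : indVec n B ∈ {x ∈ polytope 𝓑 | ∀ y ∈ polytope 𝓑, l y ≤ l x} :=
      hl ▸ ⟨indVec_mem.2 hB, hBQ i hi⟩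
    have hle : ∀ D ∈ nbrs 𝓑 B, ν D * (l (indVec n D) - l (indVec n B)) ≤ 0 := by
      intro D hD
      have hD' : D ∈ 𝓑 := by unfold nbrs at hD; exact (Finset.mem_filter.1 hD).1
      have := hB'.2 _ (indVec_mem.2 hD')
      have := hν D
      nlinarith
    have hlx : l x = l (indVec n B) +
        ∑ D ∈ nbrs 𝓑 B, ν D * (l (indVec n D) - l (indVec n B)) := by
      rw [hxe]; simp
    have hs : ∑ D ∈ nbrs 𝓑 B, ν D * (l (indVec n D) - l (indVec n B)) = 0 := by
      have h2 := hx'.2 _ (indVec_mem.2 hB)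
      have h3 := hB'.2 _ hx
      linarith
    have h0 := (Finset.sum_eq_zero_iff_of_nonpos hle).1 hs _ hC
    have h4 : l (indVec n (insert a (B.erase b))) = l (indVec n B) := by
      rcases mul_eq_zero.1 h0 with h | h
      · exact absurd h hνC.ne'
      · linarith
    have : indVec n (insert a (B.erase b)) ∈ polytope 𝓑 ∩ Q i := by
      rw [hl]
      refine ⟨indVec_mem.2 hCB, fun y hy => ?_⟩
      rw [h4]
      exact hB'.2 y hy
    exact this.2
  · have : ∑ i, w i * (indVec n (insert a (B.erase b)) i - indVec n B i) = w a - w b := by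
      have : ∀ i, w i * (indVec n (insert a (B.erase b)) i - indVec n B i) =
          (if i = a then w i else 0) - (if i = b then w i else 0) := by
        intro i
        unfold indVec
        by_cases hia : i = a
        · subst hia; simp [ha, hab]
        · by_cases hib : i = b
          · subst hib; simp [hb, hia]
          · simp [hia, hib]
      simp only [this, Finset.sum_sub_distrib]
      simp
    linarith

open Classical in
lemma pointwise {n m : ℕ} {P : Set (Fin n → ℝ)} {Ps : Fin m → Set (Fin n → ℝ)}
    (h : (⋃ i, Ps i) = P) (x : Fin n → ℝ) :
    ∑ A : Finset (Fin m), (-1 : ℤ) ^ A.card * (if x ∈ P ∧ ∀ i ∈ A, x ∈ Ps i then 1 else 0) = 0 := by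
  by_cases hx : x ∈ P
  · have hJ : (Finset.univ.filter fun i => x ∈ Ps i).Nonempty := by
      rw [← h] at hx
      obtain ⟨i, hi⟩ := Set.mem_iUnion.1 hx
      exact ⟨i, by simpa using hi⟩
    have hz := Finset.sum_powerset_neg_one_pow_card_of_nonempty hJ
    have : (Finset.univ.filter fun i => x ∈ Ps i).powerset =
        Finset.univ.filter fun A : Finset (Fin m) => ∀ i ∈ A, x ∈ Ps i := by
      ext A
      simp [Finset.subset_iff]
    rw [this, Finset.sum_filter] at hz
    refine (Finset.sum_congr rfl fun A _ => ?_).trans hz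
    simp only [hx, true_and, mul_ite, mul_one, mul_zero]
  · simp [hx]

lemma polytope_compact {n : ℕ} (𝓑 : Finset (Finset (Fin n))) : IsCompact (polytope 𝓑) :=
  (Set.toFinite _).isCompact_convexHull ℝ

lemma hdist_cont {n : ℕ} (B : Finset (Fin n)) : Continuous (hdist B) := by
  unfold hdist
  refine continuous_finsetSum _ fun i _ => ?_
  split_ifs <;> fun_prop

open Classical in
lemma basis_sum {n m : ℕ} {𝓑 : Finset (Finset (Fin n))} {𝓜 : Fin m → Finset (Finset (Fin n))}
    (h : IsMatroidSubdivision 𝓑 𝓜) (B : Finset (Fin n)) :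
    ∑ A : Finset (Fin m), (-1 : ℤ) ^ A.card * (if B ∈ interMatroid 𝓑 𝓜 A then 1 else 0) = 0 := by
  refine (Finset.sum_congr rfl fun A _ => ?_).trans (pointwise h.2.2.1 (indVec n B))
  simp only [interMatroid, Finset.mem_filter, indVec_mem]

open Classical in
lemma edge_sum {n m : ℕ} {𝓑 : Finset (Finset (Fin n))} {𝓜 : Fin m → Finset (Finset (Fin n))}
    (h : IsMatroidSubdivision 𝓑 𝓜) (B : Finset (Fin n)) (w : Fin n → ℝ)
    (hw : ∀ a b, w b < w a → w b + 1 ≤ w a) :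
    ∑ A : Finset (Fin m), (-1 : ℤ) ^ A.card * (if B ∈ interMatroid 𝓑 𝓜 A ∧
      ∃ a, a ∉ B ∧ ∃ b ∈ B, insert a (B.erase b) ∈ interMatroid 𝓑 𝓜 A ∧ w b < w a
      then 1 else 0) = 0 := by
  obtain ⟨h𝓑, h𝓜, hU, -, hF⟩ := h
  set R : Set (Fin n → ℝ) :=
    {x | hdist B x ≤ 1 / 2 ∧ 1 / 4 ≤ ∑ i, w i * (x i - indVec n B i)} with hR
  have hRc : IsClosed R :=
    (isClosed_le (hdist_cont B) continuous_const).inter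
      (isClosed_le (f := fun _ : Fin n → ℝ => (1 / 4 : ℝ))
        (g := fun x : Fin n → ℝ => ∑ i, w i * (x i - indVec n B i))
        continuous_const (by fun_prop))
  have hRv : Convex ℝ R := by
    rintro x ⟨hx1, hx2⟩ y ⟨hy1, hy2⟩ a b ha hb hab
    refine ⟨?_, ?_⟩
    · rw [hdist_comb _ _ _ _ _ hab]; nlinarith
    · have : ∑ i, w i * ((a • x + b • y) i - indVec n B i) =
          a * ∑ i, w i * (x i - indVec n B i) + b * ∑ i, w i * (y i - indVec n B i) := by
        rw [Finset.mul_sum, Finset.mul_sum, ← Finset.sum_add_distrib]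
        refine Finset.sum_congr rfl fun i _ => ?_
        simp only [Pi.add_apply, Pi.smul_apply, smul_eq_mul]
        linear_combination (w i * indVec n B i) * hab
      rw [this]; nlinarith
  set K : Finset (Fin m) → Set (Fin n → ℝ) :=
    fun A => {x | (x ∈ polytope 𝓑 ∧ ∀ i ∈ A, x ∈ polytope (𝓜 i)) ∧ x ∈ R} with hK
  have hKeq : ∀ A, K A = polytope 𝓑 ∩ ((⋂ i ∈ A, polytope (𝓜 i)) ∩ R) := by
    intro A
    ext x
    simp [hK, and_assoc]
    try tauto
  have hKc : ∀ A, IsCompact (K A) := by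
    intro A
    rw [hKeq]
    exact (polytope_compact 𝓑).inter_right
      ((isClosed_biInter fun i _ => (polytope_compact (𝓜 i)).isClosed).inter hRc)
  have hKv : ∀ A, Convex ℝ (K A) := by
    intro A
    rw [hKeq]
    exact (convex_convexHull ℝ _).inter
      ((convex_iInter₂ fun i _ => convex_convexHull ℝ _).inter hRv)
  have hsum := euler (fun A : Finset (Fin m) => (-1 : ℤ) ^ A.card) K hKc hKv (by
    intro x
    by_cases hx : x ∈ R
    · refine (Finset.sum_congr rfl fun A _ => ?_).trans (pointwise hU x)
      simp only [hK, Set.mem_ofPred_eq, hx, and_true]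
    · refine Finset.sum_eq_zero fun A _ => ?_
      rw [if_neg (fun h => hx h.2), mul_zero])
  refine (Finset.sum_congr rfl fun A _ => ?_).trans hsum
  have hiff : (B ∈ interMatroid 𝓑 𝓜 A ∧
      ∃ a, a ∉ B ∧ ∃ b ∈ B, insert a (B.erase b) ∈ interMatroid 𝓑 𝓜 A ∧ w b < w a) ↔
      (K A).Nonempty := by
    constructor
    · rintro ⟨hB, a, ha, b, hb, hC, hab⟩
      have hne : a ≠ b := fun h => ha (h ▸ hb)
      simp only [interMatroid, Finset.mem_filter] at hB hC
      have hcomb : ∀ i, ((3 / 4 : ℝ) • indVec n B + (1 / 4 : ℝ) • indVec n (insert a (B.erase b))) i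
          = indVec n B i + (if i = a then 1 / 4 else 0) - (if i = b then 1 / 4 else 0) := by
        intro i
        simp only [indVec, Pi.add_apply, Pi.smul_apply, smul_eq_mul, Finset.mem_insert,
          Finset.mem_erase]
        by_cases hia : i = a
        · subst hia; simp [ha, hne]
        · by_cases hib : i = b
          · subst hib; simp [hb, hia]; norm_num
          · by_cases hiB : i ∈ B
            · simp [hia, hib, hiB]; norm_num
            · simp [hia, hib, hiB]
      have hcv : ∀ 𝓒 : Finset (Finset (Fin n)), indVec n B ∈ polytope 𝓒 →
          indVec n (insert a (B.erase b)) ∈ polytope 𝓒 →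
          (3 / 4 : ℝ) • indVec n B + (1 / 4 : ℝ) • indVec n (insert a (B.erase b)) ∈ polytope 𝓒 :=
        fun 𝓒 h1 h2 => (convex_convexHull ℝ _) h1 h2 (by norm_num) (by norm_num) (by norm_num)
      refine ⟨(3 / 4 : ℝ) • indVec n B + (1 / 4 : ℝ) • indVec n (insert a (B.erase b)),
        ⟨hcv _ (indVec_mem.2 hB.1) (indVec_mem.2 hC.1),
          fun i hi => hcv _ (hB.2 i hi) (hC.2 i hi)⟩, ?_, ?_⟩
      · unfold hdist
        have : ∀ i, (if i ∈ B then 1 - ((3 / 4 : ℝ) • indVec n B + (1 / 4 : ℝ) •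
            indVec n (insert a (B.erase b))) i else ((3 / 4 : ℝ) • indVec n B + (1 / 4 : ℝ) •
            indVec n (insert a (B.erase b))) i) =
            (if i = a then 1 / 4 else 0) + (if i = b then 1 / 4 else 0) := by
          intro i
          rw [hcomb]
          unfold indVec
          by_cases hia : i = a
          · subst hia; simp [ha, hne]
          · by_cases hib : i = b
            · subst hib; simp [hb, hia]
            · by_cases hiB : i ∈ B <;> simp [hia, hib, hiB]
        simp only [this, Finset.sum_add_distrib, Finset.sum_ite_eq', Finset.mem_univ, if_true]
        norm_num
      · have : ∀ i, w i * (((3 / 4 : ℝ) • indVec n B + (1 / 4 : ℝ) •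
            indVec n (insert a (B.erase b))) i - indVec n B i) =
            (if i = a then w i / 4 else 0) - (if i = b then w i / 4 else 0) := by
          intro i
          rw [hcomb]
          split_ifs <;> ring
        simp only [this, Finset.sum_sub_distrib, Finset.sum_ite_eq', Finset.mem_univ, if_true]
        linarith [hw a b hab]
    · rintro ⟨x, ⟨hxP, hxA⟩, hx1, hx2⟩
      have hmem : ∀ 𝓒 : Finset (Finset (Fin n)), x ∈ polytope 𝓒 → B ∈ 𝓒 := by
        intro 𝓒 hx
        by_contra hB
        have := hdist_ge hB hx
        linarith
      have hB := hmem _ hxP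
      have hBA : B ∈ interMatroid 𝓑 𝓜 A := by
        simp only [interMatroid, Finset.mem_filter]
        exact ⟨hB, fun i hi => indVec_mem.2 (hmem _ (hxA i hi))⟩
      refine ⟨hBA, ?_⟩
      rcases A.eq_empty_or_nonempty with rfl | ⟨i₀, hi₀⟩
      · obtain ⟨a, ha, b, hb, hC, -, hab⟩ := exists_nbr h𝓑 hB hxP (∅ : Set (Fin m))
          (fun _ => ∅) (by simp) (by simp) (by simp) w (by linarith)
        exact ⟨a, ha, b, hb, by simp [interMatroid, hC], hab⟩
      · obtain ⟨a, ha, b, hb, hC, hCA, hab⟩ := exists_nbr (h𝓜 i₀) (hmem _ (hxA i₀ hi₀))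
          (hxA i₀ hi₀) {i | i ∈ A ∧ i ≠ i₀} (fun i => polytope (𝓜 i))
          (fun i hi => (hF i₀ i hi.2.symm).1) (fun i hi => hxA i hi.1)
          (fun i hi => indVec_mem.2 (hmem _ (hxA i hi.1))) w (by linarith)
        refine ⟨a, ha, b, hb, ?_, hab⟩
        simp only [interMatroid, Finset.mem_filter]
        refine ⟨?_, fun i hi => ?_⟩
        · have : indVec n (insert a (B.erase b)) ∈ polytope 𝓑 := by
            rw [← hU]
            exact Set.mem_iUnion.2 ⟨i₀, indVec_mem.2 hC⟩
          exact indVec_mem.1 this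
        · by_cases hii : i = i₀
          · rw [hii]; exact indVec_mem.2 hC
          · exact hCA i ⟨hi, hii⟩
  simp only [hiff]

/-- The weight whose increasing exchanges at `B` are those violating activity. -/
noncomputable def wt {n : ℕ} (B E I : Finset (Fin n)) (i : Fin n) : ℝ :=
  (((if i ∈ B then (if i ∈ I then -((i : ℕ) + 1 : ℤ) else ((i : ℕ) + 1 : ℤ))
    else (if i ∈ E then ((i : ℕ) + 1 : ℤ) else -((i : ℕ) + 1 : ℤ))) : ℤ) : ℝ)

lemma mem_EAset {n : ℕ} {𝓑 : Finset (Finset (Fin n))} {B : Finset (Fin n)} {a : Fin n} :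
    a ∈ EAset 𝓑 B ↔ ExtActive 𝓑 B a := by
  classical
  unfold EAset
  rw [Finset.mem_filter]
  exact and_iff_right (Finset.mem_univ _)

lemma mem_IAset {n : ℕ} {𝓑 : Finset (Finset (Fin n))} {B : Finset (Fin n)} {a : Fin n} :
    a ∈ IAset 𝓑 B ↔ IntActive 𝓑 B a := by
  classical
  unfold IAset
  rw [Finset.mem_filter]
  exact and_iff_right (Finset.mem_univ _)

lemma active_iff {n : ℕ} (𝓑 : Finset (Finset (Fin n))) (B E I : Finset (Fin n))
    (hE : ∀ a ∈ E, a ∉ B) (hI : I ⊆ B) :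
    (E ⊆ EAset 𝓑 B ∧ I ⊆ IAset 𝓑 B) ↔
      ¬ ∃ a, a ∉ B ∧ ∃ b ∈ B, insert a (B.erase b) ∈ 𝓑 ∧ wt B E I b < wt B E I a := by
  classical
  have hwt : ∀ a, a ∉ B → ∀ b ∈ B, (wt B E I b < wt B E I a ↔
      (a ∈ E ∧ b < a) ∨ (b ∈ I ∧ a < b)) := by
    intro a ha b hb
    have hab : (a : ℕ) ≠ b := fun h => ha (Fin.ext h ▸ hb)
    unfold wt
    rw [Int.cast_lt]
    simp only [ha, hb, if_true, if_false, Fin.lt_def]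
    by_cases h1 : a ∈ E <;> by_cases h2 : b ∈ I <;> simp only [h1, h2, if_true, if_false,
      true_and, false_and, or_false, false_or] <;> constructor <;> intro h <;> first | omega | exact h.elim
  constructor
  · rintro ⟨h1, h2⟩ ⟨a, ha, b, hb, hC, hlt⟩
    rcases (hwt a ha b hb).1 hlt with ⟨h3, h4⟩ | ⟨h3, h4⟩
    · have := h1 h3
      rw [mem_EAset] at this
      exact absurd (this.2 b hb hC) (not_lt.2 h4.le)
    · have := h2 h3
      rw [mem_IAset] at this
      exact absurd (this.2 a ha hC) (not_lt.2 h4.le)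
  · intro h
    constructor
    · intro a ha
      rw [mem_EAset]
      refine ⟨hE a ha, fun b hb hC => ?_⟩
      by_contra hlt
      have hab : a ≠ b := fun h => hE a ha (h ▸ hb)
      exact h ⟨a, hE a ha, b, hb, hC, (hwt a (hE a ha) b hb).2
        (Or.inl ⟨ha, lt_of_le_of_ne (not_lt.1 hlt) hab.symm⟩)⟩
    · intro b hb
      rw [mem_IAset]
      refine ⟨hI hb, fun a ha hC => ?_⟩
      by_contra hlt
      have hab : a ≠ b := fun h => ha (h ▸ hI hb)
      exact h ⟨a, ha, b, hI hb, hC, (hwt a ha b (hI hb)).2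
        (Or.inr ⟨hb, lt_of_le_of_ne (not_lt.1 hlt) hab⟩)⟩

open Classical in
lemma H_sum {n m : ℕ} {𝓑 : Finset (Finset (Fin n))} {𝓜 : Fin m → Finset (Finset (Fin n))}
    (h : IsMatroidSubdivision 𝓑 𝓜) (B E I : Finset (Fin n)) :
    ∑ A : Finset (Fin m), (-1 : ℤ) ^ A.card * (if B ∈ interMatroid 𝓑 𝓜 A ∧
      E ⊆ EAset (interMatroid 𝓑 𝓜 A) B ∧ I ⊆ IAset (interMatroid 𝓑 𝓜 A) B
      then 1 else 0) = 0 := by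
  by_cases hEI : (∀ a ∈ E, a ∉ B) ∧ I ⊆ B
  · have h1 := basis_sum h B
    have h2 := edge_sum h B (wt B E I) (by
      intro a b hab
      unfold wt at *
      rw [Int.cast_lt] at hab
      exact_mod_cast hab)
    have h3 := congrArg₂ (· - ·) h1 h2
    simp only [← Finset.sum_sub_distrib, sub_zero] at h3
    refine (Finset.sum_congr rfl fun A _ => ?_).trans h3
    rw [← mul_sub]
    congr 1
    simp only [active_iff (interMatroid 𝓑 𝓜 A) B E I hEI.1 hEI.2]
    by_cases hB : B ∈ interMatroid 𝓑 𝓜 A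
    · by_cases hx : ∃ a, a ∉ B ∧ ∃ b ∈ B, insert a (B.erase b) ∈ interMatroid 𝓑 𝓜 A ∧
          wt B E I b < wt B E I a
      · rw [if_neg (fun h => h.2 hx), if_pos hB, if_pos ⟨hB, hx⟩, sub_self]
      · rw [if_pos ⟨hB, hx⟩, if_pos hB, if_neg (fun h => hx h.2), sub_zero]
    · rw [if_neg (fun h => hB h.1), if_neg hB, if_neg (fun h => hB h.1), sub_zero]
  · refine Finset.sum_eq_zero fun A _ => ?_
    rw [if_neg, mul_zero]
    rintro ⟨-, h1, h2⟩
    refine hEI ⟨fun a ha => ?_, fun b hb => ?_⟩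
    · have := h1 ha
      rw [mem_EAset] at this
      exact this.1
    · have := h2 hb
      rw [mem_IAset] at this
      exact this.1

open Classical in
lemma G_sum {n m : ℕ} {𝓑 : Finset (Finset (Fin n))} {𝓜 : Fin m → Finset (Finset (Fin n))}
    (h : IsMatroidSubdivision 𝓑 𝓜) (B : Finset (Fin n)) (p : Finset (Fin n) × Finset (Fin n)) :
    ∑ A : Finset (Fin m), (-1 : ℤ) ^ A.card * (if B ∈ interMatroid 𝓑 𝓜 A ∧
      EAset (interMatroid 𝓑 𝓜 A) B = p.1 ∧ IAset (interMatroid 𝓑 𝓜 A) B = p.2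
      then 1 else 0) = 0 := by
  induction p using WellFoundedGT.induction with
  | ind p ih =>
    have hH := H_sum h B p.1 p.2
    have key : ∀ A : Finset (Fin m), (if B ∈ interMatroid 𝓑 𝓜 A ∧
        p.1 ⊆ EAset (interMatroid 𝓑 𝓜 A) B ∧ p.2 ⊆ IAset (interMatroid 𝓑 𝓜 A) B
        then (1 : ℤ) else 0) = ∑ q ∈ Finset.univ.filter (fun q => p ≤ q),
          (if B ∈ interMatroid 𝓑 𝓜 A ∧ EAset (interMatroid 𝓑 𝓜 A) B = q.1 ∧
            IAset (interMatroid 𝓑 𝓜 A) B = q.2 then 1 else 0) := by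
      intro A
      by_cases hB : B ∈ interMatroid 𝓑 𝓜 A
      · have : ∀ q : Finset (Fin n) × Finset (Fin n),
            (B ∈ interMatroid 𝓑 𝓜 A ∧ EAset (interMatroid 𝓑 𝓜 A) B = q.1 ∧
              IAset (interMatroid 𝓑 𝓜 A) B = q.2) ↔
            (EAset (interMatroid 𝓑 𝓜 A) B, IAset (interMatroid 𝓑 𝓜 A) B) = q := by
          intro q
          rw [Prod.ext_iff]
          simp [hB]
        simp only [this, Finset.sum_ite_eq, Finset.mem_filter, Finset.mem_univ, true_and]
        simp only [hB, Prod.le_def, true_and]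
      · simp [hB]
    simp only [key, Finset.mul_sum] at hH
    rw [Finset.sum_comm, Finset.sum_eq_single p] at hH
    · exact hH
    · intro q hq hne
      exact ih q (lt_of_le_of_ne (Finset.mem_filter.1 hq).2 hne.symm)
    · intro hp
      simp at hp

open Classical in
/-- For fixed `B ⊆ [n]`, `E ⊆ [n] \ B`, `I ⊆ B`, the indicator
`G_{B,E,I}(M) = [B is a basis of M with E(B) = E and I(B) = I]` is a valuation;
consequently the basis-activity generating function
`F(M) = ∑_{B basis of M} (B, E(B), I(B))`, valued in the free abelian group on
triples `(B, E, I)`, is a valuation. -/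
theorem statement_17 (n : ℕ) :
    (∀ B E I : Finset (Fin n), (∀ a ∈ E, a ∉ B) → I ⊆ B →
      IsValuation fun 𝓑 : Finset (Finset (Fin n)) =>
        if B ∈ 𝓑 ∧ EAset 𝓑 B = E ∧ IAset 𝓑 B = I then (1 : ℤ) else 0) ∧
    IsValuation fun 𝓑 : Finset (Finset (Fin n)) =>
      ∑ B ∈ 𝓑, FreeAbelianGroup.of
        ((B, EAset 𝓑 B, IAset 𝓑 B) : Finset (Fin n) × Finset (Fin n) × Finset (Fin n)) := by
  refine ⟨fun B E I _ _ m 𝓑 𝓜 h => ?_, fun m 𝓑 𝓜 h => ?_⟩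
  · simp only [smul_eq_mul]
    exact G_sum h B (E, I)
  · have key : ∀ 𝓒 : Finset (Finset (Fin n)), ∑ B ∈ 𝓒, FreeAbelianGroup.of
        ((B, EAset 𝓒 B, IAset 𝓒 B) : Finset (Fin n) × Finset (Fin n) × Finset (Fin n)) =
        ∑ B : Finset (Fin n), ∑ p : Finset (Fin n) × Finset (Fin n),
          (if B ∈ 𝓒 ∧ EAset 𝓒 B = p.1 ∧ IAset 𝓒 B = p.2 then (1 : ℤ) else 0) •
            FreeAbelianGroup.of (B, p) := by
      intro 𝓒
      rw [← Finset.sum_filter_add_sum_filter_not Finset.univ (fun B => B ∈ 𝓒)]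
      rw [Finset.sum_eq_zero (s := Finset.univ.filter fun B => B ∉ 𝓒), add_zero]
      · rw [Finset.filter_mem_eq_inter, Finset.univ_inter]
        refine Finset.sum_congr rfl fun B hB => ?_
        rw [Finset.sum_eq_single (EAset 𝓒 B, IAset 𝓒 B)]
        · simp [hB]
        · intro q _ hq
          rw [if_neg, zero_smul]
          rintro ⟨-, h1, h2⟩
          exact hq (Prod.ext h1.symm h2.symm)
        · intro h; exact absurd (Finset.mem_univ _) h
      · intro B hB
        simp [(Finset.mem_filter.1 hB).2]
    simp only [key, Finset.smul_sum]
    rw [Finset.sum_comm]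
    refine Finset.sum_eq_zero fun B _ => ?_
    rw [Finset.sum_comm]
    refine Finset.sum_eq_zero fun p _ => ?_
    simp only [← mul_smul]
    rw [← Finset.sum_smul, G_sum h B p, zero_smul]
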